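/- Let W ⊂ ℙⁿ(ℂ) be a linearly independent finite set and let Q ∈ ℙⁿ be a point not in W. Then there exists a homogeneous polynomial of degree 2 in n+1 variables vanishing at coordinate vectors of all points of W and not vanishing at a coordinate vector of Q. (In other words, the homogeneous ideal of a linearly independent finite set is generated by quadrics.) -/

import Mathlib

open MvPolynomial

abbrev ProjPt (n : ℕ) := Projectivization ℂ (Fin (n+1) → ℂ)

/-- The linear form with coefficient vector `v`: `v 0 • x 0 + ⋯ + v n • x n`. -/
noncomputable def linForm (n : ℕ) (v : Fin (n+1) → ℂ) : MvPolynomial (Fin (n+1)) ℂ :=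
  ∑ i, C (v i) * X i

theorem linForm_isHomogeneous (n : ℕ) (v : Fin (n+1) → ℂ) : (linForm n v).IsHomogeneous 1 :=
  IsHomogeneous.sum _ _ _ fun i _ => isHomogeneous_C_mul_X (v i) i

/-- Every linear functional on `ℂⁿ⁺¹` is evaluation of a linear form. -/
theorem eval_linForm_functional (n : ℕ) (f : (Fin (n+1) → ℂ) →ₗ[ℂ] ℂ) (x : Fin (n+1) → ℂ) :
    eval x (linForm n fun i => f fun j => if i = j then 1 else 0) = f x := by
  rw [LinearMap.pi_apply_eq_sum_univ f x]
  simp [linForm, mul_comm]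

/-- If the spans of `S` and `T` both miss `q`, then some quadric
vanishes on `S ∪ T` but not at `q`. -/
theorem exists_quadric_of_notMem_span (n : ℕ) {S T : Set (Fin (n+1) → ℂ)} {q : Fin (n+1) → ℂ}
    (hS : q ∉ Submodule.span ℂ S) (hT : q ∉ Submodule.span ℂ T) :
    ∃ F : MvPolynomial (Fin (n+1)) ℂ, F.IsHomogeneous 2 ∧
      (∀ x ∈ S ∪ T, eval x F = 0) ∧ eval q F ≠ 0 := by
  obtain ⟨f, hfq, hf⟩ := Submodule.exists_le_ker_of_notMem hS
  obtain ⟨g, hgq, hg⟩ := Submodule.exists_le_ker_of_notMem hT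
  refine ⟨_, (linForm_isHomogeneous n fun i => f fun j => if i = j then 1 else 0).mul
    (linForm_isHomogeneous n fun i => g fun j => if i = j then 1 else 0), ?_, ?_⟩
  · rintro x (hx | hx) <;> rw [map_mul, eval_linForm_functional, eval_linForm_functional]
    · rw [LinearMap.mem_ker.1 (hf (Submodule.subset_span hx)), zero_mul]
    · rw [LinearMap.mem_ker.1 (hg (Submodule.subset_span hx)), mul_zero]
  · rw [map_mul, eval_linForm_functional, eval_linForm_functional]
    exact mul_ne_zero hfq hgq

/-- A nonzero vector in the span of a linearly independent family leaves the span when a suitable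
member is removed. -/
theorem LinearIndependent.exists_notMem_span_image_compl {ι K V : Type*} [DivisionRing K]
    [AddCommGroup V] [Module K V] {v : ι → V} (hv : LinearIndependent K v) {q : V} (hq : q ≠ 0)
    (hmem : q ∈ Submodule.span K (Set.range v)) :
    ∃ i, q ∉ Submodule.span K (v '' {i}ᶜ) := by
  obtain ⟨l, rfl⟩ := Finsupp.mem_span_range_iff_exists_finsupp.1 hmem
  obtain ⟨i, hi⟩ : ∃ i, l i ≠ 0 := by
    by_contra! h
    exact hq (by simp [Finsupp.sum, h])
  refine ⟨i, fun h => ?_⟩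
  obtain ⟨m, hm, hml⟩ := (Finsupp.mem_span_image_iff_linearCombination K).1 h
  obtain rfl : m = l := hv hml
  exact hm (Finsupp.mem_support_iff.2 hi) rfl

/-- A linearly independent finite set `W ⊂ ℙⁿ(ℂ)` is cut out by quadrics: for every point
`Q ∉ W` there is a homogeneous polynomial of degree `2` vanishing at all points of `W`
and not vanishing at `Q`. -/
theorem indep_separated_by_quadric (n : ℕ) (W : Finset (ProjPt n))
    (hW : LinearIndependent ℂ (fun P : { x // x ∈ W } => (P : ProjPt n).rep))
    (Q : ProjPt n) (hQ : Q ∉ W) :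
    ∃ F : MvPolynomial (Fin (n+1)) ℂ, F.IsHomogeneous 2 ∧
      (∀ P ∈ W, eval P.rep F = 0) ∧ eval Q.rep F ≠ 0 := by
  by_cases hmem : Q.rep ∈ Submodule.span ℂ
      (Set.range fun P : { x // x ∈ W } => (P : ProjPt n).rep)
  · obtain ⟨P₀, hP₀⟩ := hW.exists_notMem_span_image_compl Q.rep_nonzero hmem
    have hne : Q.rep ∉ Submodule.span ℂ {(P₀ : ProjPt n).rep} := by
      intro h
      obtain ⟨a, ha⟩ := Submodule.mem_span_singleton.1 h
      have hQP : Q = P₀ := by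
        rw [← Q.mk_rep, ← (P₀ : ProjPt n).mk_rep, Projectivization.mk_eq_mk_iff']
        exact ⟨a, ha⟩
      exact hQ (hQP ▸ P₀.2)
    obtain ⟨F, hF, hFW, hFQ⟩ := exists_quadric_of_notMem_span n hP₀ hne
    refine ⟨F, hF, fun P hP => hFW _ ?_, hFQ⟩
    by_cases h : (⟨P, hP⟩ : { x // x ∈ W }) = P₀
    · exact Or.inr (by simp [← h])
    · exact Or.inl ⟨⟨P, hP⟩, h, rfl⟩
  · obtain ⟨F, hF, hFW, hFQ⟩ := exists_quadric_of_notMem_span n hmem hmem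
    exact ⟨F, hF, fun P hP => hFW _ (Or.inl ⟨⟨P, hP⟩, rfl⟩), hFQ⟩
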